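/- The identity xx^♯ = x^♯x = N(x)·1 holds for all x ∈ J(A,μ) if and only if μ ∈ F^×·1. (In particular, taking x = (0,1,0), the identity forces μ = ⅓T_A(μ)·1 ∈ F.) -/

import Mathlib

/-- A separable associative algebra of degree three over `F`:
an associative unital `F`-algebra `A` equipped with a cubic norm `NA`,
directional derivative `Ndir x y = N_A(x;y)` (the coefficient of `Z` in
`N_A(x+Zy)`), trace `TA`, quadratic form `SA`, adjoint `sharp` and bilinear
trace `Tbil`, satisfying the degree-3 identity, the trace-sharp formula and
the trace-product formula. -/
structure DegreeThreeAlg (F A : Type*) [Field F] [Ring A] [Algebra F A] where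
  NA : A → F
  Ndir : A → A → F
  TA : A → F
  SA : A → F
  sharp : A → A
  Tbil : A → A → F
  NA_one : NA 1 = 1
  NA_smul : ∀ (c : F) (x : A), NA (c • x) = c ^ 3 * NA x
  Ndir_expand : ∀ (x y : A) (z : F),
    NA (x + z • y) = NA x + z * Ndir x y + z ^ 2 * Ndir y x + z ^ 3 * NA y
  Ndir_add_right : ∀ x y z : A, Ndir x (y + z) = Ndir x y + Ndir x z
  Ndir_smul_right : ∀ (x : A) (c : F) (y : A), Ndir x (c • y) = c * Ndir x y
  TA_def : ∀ x : A, TA x = Ndir 1 x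
  SA_def : ∀ x : A, SA x = Ndir x 1
  sharp_def : ∀ x : A, sharp x = x ^ 2 - TA x • x + SA x • (1 : A)
  Tbil_def : ∀ x y : A,
    Tbil x y = TA x * TA y - (Ndir (1 + y) x - Ndir 1 x - Ndir y x)
  degree3 : ∀ x : A, x ^ 3 - TA x • x ^ 2 + SA x • x - NA x • (1 : A) = 0
  trace_sharp : ∀ x y : A, Tbil (sharp x) y = Ndir x y
  trace_product : ∀ x y : A, Tbil x y = TA (x * y)

variable {F A : Type*} [Field F] [Ring A] [Algebra F A]

/-- Conjugation `x̄ = ½(T_A(x)·1 − x)` in `A`. -/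
noncomputable def bar (D : DegreeThreeAlg F A) (x : A) : A :=
  (2 : F)⁻¹ • (D.TA x • (1 : A) - x)

/-- Linearization of the adjoint in `A`: `x ♯ y = (x+y)^♯ − x^♯ − y^♯`. -/
noncomputable def sharpBil (D : DegreeThreeAlg F A) (x y : A) : A :=
  D.sharp (x + y) - D.sharp x - D.sharp y

/-- `x × y = ½ (x ♯ y)` in `A`. -/
noncomputable def cross (D : DegreeThreeAlg F A) (x y : A) : A :=
  (2 : F)⁻¹ • sharpBil D x y

/-- Multiplication of the generalized first Tits construction `J(A,μ)` on `A ⊕ A ⊕ A`. -/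
noncomputable def Jmul (D : DegreeThreeAlg F A) (μ : Aˣ) (x y : A × A × A) : A × A × A :=
  ((2 : F)⁻¹ • (x.1 * y.1 + y.1 * x.1) + bar D (x.2.1 * y.2.2) + bar D (y.2.1 * x.2.2),
   bar D x.1 * y.2.1 + bar D y.1 * x.2.1 + (↑μ⁻¹ : A) * cross D x.2.2 y.2.2,
   x.2.2 * bar D y.1 + y.2.2 * bar D x.1 + (↑μ : A) * cross D x.2.1 y.2.1)

/-- Adjoint on `J(A,μ)`. -/
noncomputable def Jsharp (D : DegreeThreeAlg F A) (μ : Aˣ) (x : A × A × A) : A × A × A :=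
  (D.sharp x.1 - x.2.1 * x.2.2,
   (↑μ⁻¹ : A) * D.sharp x.2.2 - x.1 * x.2.1,
   (↑μ : A) * D.sharp x.2.1 - x.2.2 * x.1)

/-- Sharp map on `J(A,μ)`: linearization of the adjoint. -/
noncomputable def JsharpBil (D : DegreeThreeAlg F A) (μ : Aˣ) (x y : A × A × A) : A × A × A :=
  Jsharp D μ (x + y) - Jsharp D μ x - Jsharp D μ y

/-- Generalized trace on `J(A,μ)`. -/
def JT (D : DegreeThreeAlg F A) (x : A × A × A) : F := D.TA x.1

/-- Generalized bilinear trace on `J(A,μ)`. -/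
def JTbil (D : DegreeThreeAlg F A) (x y : A × A × A) : F :=
  D.TA (x.1 * y.1) + D.TA (x.2.1 * y.2.2) + D.TA (x.2.2 * y.2.1)

/-- Generalized cubic norm `N : J(A,μ) → A`. -/
noncomputable def JN (D : DegreeThreeAlg F A) (μ : Aˣ) (x : A × A × A) : A :=
  D.NA x.1 • (1 : A) + D.NA x.2.1 • (↑μ : A) + D.NA x.2.2 • (↑μ⁻¹ : A)
    - D.TA (x.1 * x.2.1 * x.2.2) • (1 : A)

/-- The unit `1 = (1,0,0)` of `J(A,μ)`. -/
def Jone : A × A × A := ((1 : A), (0 : A), (0 : A))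

/-!
For `μ = c·1` with `c ∈ F^×`, linearizing `x x^♯ = x^♯ x = N_A(x)1` gives the identities
`y × (yz) = bar(z) y^♯`, `y × (zy) = y^♯ bar(z)` and `y × x^♯ = bar(xy) x = x bar(yx)`; together
with `bar(x^♯) = bar(x) x = x bar(x)` they make the last two components of `x x^♯` cancel term by
term. Conversely, the first component of the identity at `(0, 1, 0)` is `bar(μ) = μ`, that is,
`3μ = T_A(μ)1`.
-/

theorem ne_zero_of_unit_eq_smul_one [Nontrivial A] {μ : Aˣ} {c : F}
    (hμ : (↑μ : A) = c • (1 : A)) : c ≠ 0 := by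
  rintro rfl
  exact μ.ne_zero (by rw [hμ, zero_smul])

theorem unit_inv_eq_inv_smul_one [Nontrivial A] {μ : Aˣ} {c : F}
    (hμ : (↑μ : A) = c • (1 : A)) : (↑μ⁻¹ : A) = c⁻¹ • (1 : A) := by
  rw [← Units.mul_eq_one_iff_inv_eq, hμ, smul_mul_smul_comm,
    mul_inv_cancel₀ (ne_zero_of_unit_eq_smul_one hμ), one_smul, one_mul]

namespace DegreeThreeAlg

open QuadraticMap (polar)

variable (D : DegreeThreeAlg F A)

/-- The trace `T_A`, bundled as a linear form so that Mathlib's linear-map lemmas apply to it. -/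
def traceForm : A →ₗ[F] F where
  toFun := D.TA
  map_add' x y := by simp only [D.TA_def, D.Ndir_add_right]
  map_smul' c x := by simp only [D.TA_def, D.Ndir_smul_right, smul_eq_mul, RingHom.id_apply]

theorem TA_zero : D.TA 0 = 0 := map_zero D.traceForm

theorem TA_add (x y : A) : D.TA (x + y) = D.TA x + D.TA y := map_add D.traceForm x y

theorem TA_sub (x y : A) : D.TA (x - y) = D.TA x - D.TA y := map_sub D.traceForm x y

theorem TA_smul (c : F) (x : A) : D.TA (c • x) = c * D.TA x := map_smul D.traceForm c x

theorem NA_zero : D.NA 0 = 0 := by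
  simpa using D.NA_smul 0 0

theorem NA_add (x y : A) : D.NA (x + y) = D.NA x + D.Ndir x y + D.Ndir y x + D.NA y := by
  simpa using D.Ndir_expand x y 1

theorem NA_sub (x y : A) : D.NA (x - y) = D.NA x - D.Ndir x y + D.Ndir y x - D.NA y := by
  have h := D.Ndir_expand x y (-1)
  rw [neg_one_smul, ← sub_eq_add_neg] at h
  linear_combination h

theorem nontrivial (D : DegreeThreeAlg F A) : Nontrivial A := by
  refine nontrivial_of_ne 1 0 fun h => one_ne_zero (α := F) ?_
  rw [← D.NA_one, h, D.NA_zero]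

theorem TA_one (h2 : (2 : F) ≠ 0) : D.TA 1 = 3 := by
  have h : D.NA ((2 : F) • 1) = D.NA 1 + D.Ndir 1 1 + D.Ndir 1 1 + D.NA 1 := by
    rw [two_smul, D.NA_add]
  rw [D.NA_smul, D.NA_one, ← D.TA_def] at h
  exact mul_left_cancel₀ h2 (by linear_combination -h)

theorem Ndir_smul_left (c : F) (x y : A) : D.Ndir (c • x) y = c ^ 2 * D.Ndir x y := by
  have h := D.NA_add y (c • x)
  rw [D.Ndir_expand y x c, D.Ndir_smul_right, D.NA_smul] at h
  linear_combination -h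

-- Both sides are the full trilinearization of the cubic form `N_A`.
theorem polar_Ndir_right_comm (x y z : A) :
    polar (D.Ndir · z) x y = polar (D.Ndir · y) x z := by
  have h : D.NA (x + y + z) = D.NA (x + z + y) := by rw [add_right_comm]
  simp only [D.NA_add, D.Ndir_add_right] at h
  simp only [polar]
  linear_combination h

theorem TA_mul_eq_sub_polar (x y : A) :
    D.TA (x * y) = D.TA x * D.TA y - polar (D.Ndir · x) 1 y := by
  rw [← D.trace_product, D.Tbil_def, polar]

theorem TA_mul_comm (x y : A) : D.TA (x * y) = D.TA (y * x) := by
  rw [TA_mul_eq_sub_polar, TA_mul_eq_sub_polar, polar_Ndir_right_comm, mul_comm (D.TA x)]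

theorem SA_smul (c : F) (x : A) : D.SA (c • x) = c ^ 2 * D.SA x := by
  rw [D.SA_def, D.SA_def, D.Ndir_smul_left]

theorem SA_add (x y : A) :
    D.SA (x + y) = D.SA x + D.SA y + D.TA x * D.TA y - D.TA (x * y) := by
  have h : polar (D.Ndir · 1) y x = polar (D.Ndir · x) 1 y := by
    rw [polar_Ndir_right_comm, QuadraticMap.polar_comm]
  rw [D.TA_mul_eq_sub_polar, ← h, polar, add_comm y x, D.SA_def, D.SA_def, D.SA_def]
  ring

theorem sharp_smul (c : F) (x : A) : D.sharp (c • x) = c ^ 2 • D.sharp x := by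
  simp only [D.sharp_def, D.TA_smul, D.SA_smul, smul_pow]
  module

theorem sharp_zero : D.sharp 0 = 0 := by
  simpa using D.sharp_smul 0 0

theorem sharp_one : D.sharp 1 = 1 := by
  rw [D.sharp_def, D.SA_def, D.TA_def, one_pow, sub_add_cancel]

theorem mul_sharp (x : A) : x * D.sharp x = D.NA x • (1 : A) := by
  rw [← sub_eq_zero, ← D.degree3 x, D.sharp_def]
  simp only [pow_succ, pow_zero, one_mul, mul_add, mul_sub, mul_smul_comm, mul_one, ← mul_assoc]

theorem sharp_mul (x : A) : D.sharp x * x = D.NA x • (1 : A) := by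
  rw [← sub_eq_zero, ← D.degree3 x, D.sharp_def]
  simp only [pow_succ, pow_zero, one_mul, add_mul, sub_mul, smul_mul_assoc]

theorem TA_sharp_mul (x y : A) : D.TA (D.sharp x * y) = D.Ndir x y := by
  rw [← D.trace_product, D.trace_sharp]

theorem TA_sharp (x : A) : D.TA (D.sharp x) = D.SA x := by
  rw [D.SA_def, ← D.TA_sharp_mul, mul_one]

theorem Ndir_eq (x y : A) :
    D.Ndir x y = D.TA (x * x * y) - D.TA x * D.TA (x * y) + D.SA x * D.TA y := by
  rw [← D.TA_sharp_mul, D.sharp_def, pow_two]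
  simp only [add_mul, sub_mul, smul_mul_assoc, one_mul, D.TA_add, D.TA_sub, D.TA_smul]

theorem sharpBil_eq (x y : A) :
    sharpBil D x y = x * y + y * x - D.TA x • y - D.TA y • x
      + (D.TA x * D.TA y - D.TA (x * y)) • (1 : A) := by
  simp only [sharpBil, D.sharp_def, D.SA_add, D.TA_add, pow_two, add_mul, mul_add]
  module

theorem sharpBil_comm (x y : A) : sharpBil D x y = sharpBil D y x := by
  rw [sharpBil, sharpBil, add_comm x y, sub_right_comm]

theorem sharpBil_sub_right (x y z : A) :
    sharpBil D x (y - z) = sharpBil D x y - sharpBil D x z := by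
  simp only [D.sharpBil_eq, mul_sub, sub_mul, D.TA_sub]
  module

theorem sharpBil_smul_right (c : F) (x y : A) : sharpBil D x (c • y) = c • sharpBil D x y := by
  simp only [D.sharpBil_eq, mul_smul_comm, smul_mul_assoc, D.TA_smul]
  module

theorem sharp_add (x y : A) : D.sharp (x + y) = D.sharp x + D.sharp y + sharpBil D x y := by
  rw [sharpBil]
  abel

theorem sharp_sub (x y : A) : D.sharp (x - y) = D.sharp x + D.sharp y - sharpBil D x y := by
  have h := D.sharp_add x ((-1 : F) • y)
  rw [D.sharp_smul, D.sharpBil_smul_right] at h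
  rw [sub_eq_add_neg, ← neg_one_smul F y, h]
  module

-- The part of `x^♯ x = N_A(x)1` linear in `y` is isolated by comparing `x + y` with `x - y`.
theorem sharp_mul_add_sharpBil_mul (h2 : (2 : F) ≠ 0) (x y : A) :
    D.sharp x * y + sharpBil D x y * x = D.Ndir x y • (1 : A) := by
  have h_add := D.sharp_mul (x + y)
  have h_sub := D.sharp_mul (x - y)
  have h_y := D.sharp_mul y
  rw [D.sharp_add, D.NA_add] at h_add
  rw [D.sharp_sub, D.NA_sub] at h_sub
  refine smul_right_injective A h2 ?_
  simp only [add_mul, mul_add, sub_mul, mul_sub] at h_add h_sub ⊢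
  linear_combination (norm := module) h_add - h_sub - (2 : F) • h_y

theorem mul_sharp_add_mul_sharpBil (h2 : (2 : F) ≠ 0) (x y : A) :
    y * D.sharp x + x * sharpBil D x y = D.Ndir x y • (1 : A) := by
  rw [← D.sharp_mul_add_sharpBil_mul h2, D.sharp_def, D.sharpBil_eq]
  simp only [pow_two, mul_add, mul_sub, add_mul, sub_mul, smul_mul_assoc, mul_smul_comm, one_mul,
    mul_one, ← mul_assoc]
  module

theorem sharpBil_self_mul (h2 : (2 : F) ≠ 0) (x y : A) :
    sharpBil D x (x * y) = (D.TA y • (1 : A) - y) * D.sharp x := by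
  have h : sharpBil D x (x * y) - x * sharpBil D x y
      = D.TA y • D.sharp x - D.Ndir x y • (1 : A) := by
    rw [D.sharpBil_eq, D.sharpBil_eq, D.Ndir_eq, D.sharp_def]
    simp only [pow_two, mul_add, mul_sub, mul_smul_comm, mul_one, ← mul_assoc]
    module
  rw [sub_mul, smul_one_mul]
  linear_combination (norm := module) h + D.mul_sharp_add_mul_sharpBil h2 x y

theorem sharpBil_mul_self (h2 : (2 : F) ≠ 0) (x y : A) :
    sharpBil D x (y * x) = D.sharp x * (D.TA y • (1 : A) - y) := by
  have h : sharpBil D x (y * x) - sharpBil D x y * x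
      = D.TA y • D.sharp x - D.Ndir x y • (1 : A) := by
    rw [D.sharpBil_eq, D.sharpBil_eq, D.Ndir_eq, D.sharp_def, D.TA_mul_comm x (y * x),
      D.TA_mul_comm (x * x), D.TA_mul_comm x y]
    simp only [pow_two, add_mul, sub_mul, smul_mul_assoc, one_mul, ← mul_assoc]
    module
  rw [mul_sub, mul_smul_comm, mul_one]
  linear_combination (norm := module) h + D.sharp_mul_add_sharpBil_mul h2 x y

theorem sharpBil_sharp_left (h2 : (2 : F) ≠ 0) (x y : A) :
    sharpBil D (D.sharp x) y = D.TA (x * y) • x - x * y * x := by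
  rw [D.sharpBil_eq, D.TA_sharp_mul, D.TA_sharp, sub_smul, ← D.sharp_mul_add_sharpBil_mul h2,
    D.sharpBil_eq, D.sharp_def]
  simp only [pow_two, mul_add, mul_sub, add_mul, sub_mul, smul_mul_assoc, mul_smul_comm, one_mul,
    mul_one, ← mul_assoc]
  module

theorem bar_zero : bar D 0 = 0 := by
  rw [bar, D.TA_zero, zero_smul, sub_zero, smul_zero]

theorem bar_one (h2 : (2 : F) ≠ 0) : bar D 1 = 1 := by
  rw [bar, D.TA_one h2, inv_smul_eq_iff₀ h2]
  module

theorem bar_sub (x y : A) : bar D (x - y) = bar D x - bar D y := by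
  simp only [bar, D.TA_sub]
  module

theorem bar_smul (c : F) (x : A) : bar D (c • x) = c • bar D x := by
  simp only [bar, D.TA_smul]
  module

theorem bar_add_bar_of_TA_eq (h2 : (2 : F) ≠ 0) {x y : A} (h : D.TA x = D.TA y) :
    bar D x + bar D y = D.TA x • (1 : A) - (2 : F)⁻¹ • (x + y) := by
  rw [bar, bar, ← h]
  match_scalars <;> field_simp
  ring

theorem bar_sharp (x : A) : bar D (D.sharp x) = bar D x * x := by
  rw [bar, bar, D.TA_sharp, D.sharp_def, smul_mul_assoc, sub_mul, smul_one_mul, pow_two]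
  module

theorem bar_mul_mul_eq_mul_bar_mul (x y : A) : bar D (x * y) * x = x * bar D (y * x) := by
  simp only [bar, D.TA_mul_comm x y, smul_mul_assoc, mul_smul_comm, sub_mul, mul_sub, one_mul,
    mul_one, mul_assoc]

theorem bar_mul_self (x : A) : bar D x * x = x * bar D x := by
  simpa using D.bar_mul_mul_eq_mul_bar_mul x 1

theorem eq_smul_one_of_bar_eq_self (h2 : (2 : F) ≠ 0) (h3 : (3 : F) ≠ 0) {x : A}
    (h : bar D x = x) : x = (3⁻¹ * D.TA x) • (1 : A) := by
  have h_two : D.TA x • (1 : A) - x = (2 : F) • x := (inv_smul_eq_iff₀ h2).mp h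
  have h_three : D.TA x • (1 : A) = (3 : F) • x := by
    rw [sub_eq_iff_eq_add.mp h_two]
    module
  rw [mul_smul, h_three, inv_smul_smul₀ h3]

theorem cross_comm (x y : A) : cross D x y = cross D y x := by
  rw [cross, cross, D.sharpBil_comm]

theorem cross_sub_right (x y z : A) : cross D x (y - z) = cross D x y - cross D x z := by
  rw [cross, cross, cross, D.sharpBil_sub_right, smul_sub]

theorem cross_smul_right (c : F) (x y : A) : cross D x (c • y) = c • cross D x y := by
  rw [cross, cross, D.sharpBil_smul_right, smul_comm]

theorem cross_self_mul (h2 : (2 : F) ≠ 0) (x y : A) :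
    cross D x (x * y) = bar D y * D.sharp x := by
  rw [cross, bar, D.sharpBil_self_mul h2, smul_mul_assoc]

theorem cross_mul_self (h2 : (2 : F) ≠ 0) (x y : A) :
    cross D x (y * x) = D.sharp x * bar D y := by
  rw [cross, bar, D.sharpBil_mul_self h2, mul_smul_comm]

theorem cross_sharp_right (h2 : (2 : F) ≠ 0) (x y : A) :
    cross D y (D.sharp x) = bar D (x * y) * x := by
  rw [D.cross_comm, cross, bar, D.sharpBil_sharp_left h2, smul_mul_assoc, sub_mul, smul_one_mul]

theorem Jmul_comm (μ : Aˣ) (x y : A × A × A) : Jmul D μ x y = Jmul D μ y x := by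
  simp only [Jmul, D.cross_comm y.2.2, D.cross_comm y.2.1, add_comm (y.1 * x.1),
    add_right_comm _ (bar D (x.2.1 * y.2.2)), add_comm (bar D x.1 * _), add_comm (x.2.2 * _)]

theorem Jmul_Jsharp_zero_one_zero_fst (μ : Aˣ) :
    (Jmul D μ (0, 1, 0) (Jsharp D μ (0, 1, 0))).1 = bar D ↑μ := by
  simp [Jmul, Jsharp, D.sharp_zero, D.sharp_one, D.bar_zero]

theorem JN_zero_one_zero (μ : Aˣ) : JN D μ (0, 1, 0) = ↑μ := by
  simp [JN, D.NA_zero, D.NA_one, D.TA_zero]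

theorem unit_eq_smul_one_of_Jmul_Jsharp_zero_one_zero (h2 : (2 : F) ≠ 0) (h3 : (3 : F) ≠ 0)
    {μ : Aˣ} (h : (Jmul D μ (0, 1, 0) (Jsharp D μ (0, 1, 0))).1 = JN D μ (0, 1, 0)) :
    (↑μ : A) = (3⁻¹ * D.TA ↑μ) • (1 : A) := by
  rw [D.Jmul_Jsharp_zero_one_zero_fst, D.JN_zero_one_zero] at h
  exact D.eq_smul_one_of_bar_eq_self h2 h3 h

theorem Jmul_Jsharp_of_unit_eq_smul_one (h2 : (2 : F) ≠ 0) {μ : Aˣ} {c : F}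
    (hμ : (↑μ : A) = c • (1 : A)) (x : A × A × A) :
    Jmul D μ x (Jsharp D μ x) = (JN D μ x, 0, 0) := by
  have := D.nontrivial
  have hc := ne_zero_of_unit_eq_smul_one hμ
  obtain ⟨x₀, x₁, x₂⟩ := x
  simp only [Jmul, Jsharp, JN, hμ, unit_inv_eq_inv_smul_one hμ, smul_one_mul, Prod.mk.injEq]
  refine ⟨?_, ?_, ?_⟩
  · have h_TA : D.TA (x₀ * x₁ * x₂) = D.TA (x₁ * (x₂ * x₀)) := by
      rw [mul_assoc, D.TA_mul_comm, mul_assoc]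
    have h_bar := D.bar_add_bar_of_TA_eq h2 h_TA
    have h_jordan : (2 : F)⁻¹ • (x₀ * (D.sharp x₀ - x₁ * x₂) + (D.sharp x₀ - x₁ * x₂) * x₀)
        = D.NA x₀ • (1 : A) - (2 : F)⁻¹ • (x₀ * x₁ * x₂ + x₁ * (x₂ * x₀)) := by
      rw [mul_sub, sub_mul, D.mul_sharp, D.sharp_mul, sub_add_sub_comm, smul_sub, ← two_smul F,
        inv_smul_smul₀ h2, mul_assoc x₀, mul_assoc x₁]
    rw [h_jordan]
    simp only [mul_sub, sub_mul, mul_smul_comm, smul_mul_assoc, D.mul_sharp, D.sharp_mul,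
      D.bar_sub, D.bar_smul, D.bar_one h2]
    linear_combination (norm := module) -h_bar
  · simp only [D.bar_sub, D.bar_sharp, D.cross_sub_right, D.cross_smul_right,
      D.cross_self_mul h2, D.cross_sharp_right h2, mul_sub, sub_mul, mul_smul_comm, smul_sub,
      inv_smul_smul₀ hc, mul_assoc]
    abel
  · simp only [D.bar_sub, D.bar_sharp, D.bar_mul_self, D.cross_sub_right, D.cross_smul_right,
      D.cross_mul_self h2, D.cross_sharp_right h2, D.bar_mul_mul_eq_mul_bar_mul, mul_sub, sub_mul,
      smul_mul_assoc, smul_sub, smul_inv_smul₀ hc, mul_assoc]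
    abel

end DegreeThreeAlg

/-- `x x^♯ = x^♯ x = N(x)·1` holds for all `x ∈ J(A,μ)` iff `μ ∈ F^×·1`. -/
theorem Jsharp_mul_iff_scalar (F A : Type*) [Field F] [Ring A] [Algebra F A]
    (h2 : (2 : F) ≠ 0) (h3 : (3 : F) ≠ 0) (D : DegreeThreeAlg F A) (μ : Aˣ) :
    (∀ x : A × A × A,
        Jmul D μ x (Jsharp D μ x) = (JN D μ x, 0, 0) ∧
        Jmul D μ (Jsharp D μ x) x = (JN D μ x, 0, 0)) ↔
      ∃ c : F, c ≠ 0 ∧ (↑μ : A) = c • (1 : A) := by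
  constructor
  · intro h
    have := D.nontrivial
    have hμ := D.unit_eq_smul_one_of_Jmul_Jsharp_zero_one_zero h2 h3
      (congrArg Prod.fst (h (0, 1, 0)).1)
    exact ⟨_, ne_zero_of_unit_eq_smul_one hμ, hμ⟩
  · rintro ⟨c, -, hμ⟩ x
    have hx := D.Jmul_Jsharp_of_unit_eq_smul_one h2 hμ x
    exact ⟨hx, (D.Jmul_comm μ _ _).trans hx⟩
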